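/- Unique continuation from a half-space: Let d ≥ 1, h > 0, s ∈ (0,1), and let u : ℤ^d → ℝ be square-summable, i.e. Σ_{j∈ℤ^d} |u_j|² < ∞ (note every square-summable u lies in ℓ_s, so (−Δ_d)^s u is defined). If u_j = 0 and (−Δ_d)^s u_j = 0 for every j = (j_1,…,j_d) ∈ ℤ^d with j_d ≥ 0, then u ≡ 0 on ℤ^d. -/

import Mathlib

open scoped BigOperators
open MeasureTheory

/-- Modified Bessel function of the first kind of integer order `k`. -/
noncomputable def besselI (k : ℤ) (t : ℝ) : ℝ :=
  ∑' ℓ : ℕ, (t / 2) ^ (2 * ℓ + k.natAbs) /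
    ((Nat.factorial ℓ : ℝ) * Real.Gamma ((ℓ : ℝ) + (k.natAbs : ℝ) + 1))

/-- Semidiscrete heat kernel `G(m,t) = e^{-2dt} ∏ I_{m_i}(2t)` on `ℤ^d`. -/
noncomputable def heatG (d : ℕ) (m : Fin d → ℤ) (t : ℝ) : ℝ :=
  Real.exp (-(2 * (d : ℝ) * t)) * ∏ i, besselI (m i) (2 * t)

/-- The discrete kernel `K_s^h(m)`, with `K_s^h(0) = 0`. -/
noncomputable def Ksh (d : ℕ) (h s : ℝ) (m : Fin d → ℤ) : ℝ :=
  if m = 0 then 0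
  else h ^ (-(2 * s)) * |Real.Gamma (-s)|⁻¹ *
    ∫ t in Set.Ioi (0 : ℝ), heatG d m t / t ^ (1 + s)

/-- Membership in the space `ℓ_s`. -/
def memLs (d : ℕ) (s : ℝ) (u : (Fin d → ℤ) → ℝ) : Prop :=
  Summable fun m : Fin d → ℤ =>
    |u m| * (1 + Real.sqrt (∑ i, ((m i : ℝ)) ^ 2)) ^ (-((d : ℝ) + 2 * s))

/-- The fractional discrete Laplacian `(-Δ_d)^s u_j = ∑_{m} (u_j - u_m) K_s^h(j-m)`
(the `m = j` term vanishes since `K_s^h(0) = 0`). -/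
noncomputable def fracLap (d : ℕ) (h s : ℝ) (u : (Fin d → ℤ) → ℝ) (j : Fin d → ℤ) : ℝ :=
  ∑' m : Fin d → ℤ, (u j - u m) * Ksh d h s (j - m)

/-!
Subordination writes `(-Δ)^s` as an average of the heat semigroup `e^{tΔ}` against `t^{-1-s} dt`,
and `t^{-1-s}` is in turn a multiple of `∫ μ^s e^{-μt} dμ`. With `v_μ = (μ - Δ)⁻¹ u`, the Laplace
transform of the semigroup, and `R` the reflection exchanging the half-space `H = {n ≤ p_l}` with
its complement, the vanishing of `u` and `(-Δ)^s u` on `H` therefore gives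
`0 = ∫ μ^s ⟪R u, v_μ⟫ dμ`.

Green's identity evaluates `⟪R u, v_μ⟫` as `b_{n-1}² - b_n²`, where `b_k` is the `ℓ²` norm of `v_μ`
on the hyperplane `p_l = k`. Since `v_μ` solves the homogeneous equation in `H`, an energy estimate
gives `b_n ≤ b_{n-1}`, with equality only if `v_μ` vanishes on `H` and on the hyperplane `n - 1`.
Hence this happens for almost every `μ`. Finally, if `v_μ` vanishes for `p_l ≥ k`, then on the
hyperplane `k` the equation reads `u p = -v_μ (p - e_l)`. As `μ ‖v_μ‖ ≤ ‖u‖`, letting `μ → ∞` shows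
that `u`, and then `v_μ`, vanishes one hyperplane further, so `u = 0` by descent.
-/

namespace DiscreteLaplacian

open scoped lp InnerProductSpace Topology
open Filter Set

lemma hasSum_mul_of_summable_norm {R α β : Type*} [NormedRing R] [CompleteSpace R] {f : α → R}
    {g : β → R} {a b : R} (hf : HasSum f a) (hg : HasSum g b) (hf' : Summable fun i => ‖f i‖)
    (hg' : Summable fun j => ‖g j‖) : HasSum (fun p : α × β => f p.1 * g p.2) (a * b) :=
  hf.mul hg (summable_mul_of_summable_norm hf' hg')

section Bessel

variable {R : Type*} [NormedRing R] [NormedAlgebra ℝ R] [CompleteSpace R]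

/-- The `ℓ`-th term `t ^ (2ℓ + |k|) / (ℓ! (ℓ + |k|)!)` of the series of `I_k(2t)`. -/
noncomputable def besselTerm (t : ℝ) (k : ℤ) (l : ℕ) : ℝ :=
  t ^ (2 * l + k.natAbs) / ((l.factorial : ℝ) * ((l + k.natAbs).factorial : ℝ))

lemma besselI_two_mul (k : ℤ) (t : ℝ) : besselI k (2 * t) = ∑' l, besselTerm t k l := by
  refine tsum_congr fun l => ?_
  rw [besselTerm, mul_div_cancel_left₀ t two_ne_zero, ← Nat.cast_add, Real.Gamma_nat_eq_factorial]

lemma besselTerm_nonneg {t : ℝ} (ht : 0 ≤ t) (k : ℤ) (l : ℕ) : 0 ≤ besselTerm t k l := by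
  unfold besselTerm
  positivity

/-- The bijection `ℤ × ℕ ≃ ℕ × ℕ` whose inverse sends a pair of naturals to its difference and
its minimum; it groups the terms of a product of two power series in `x` and `x⁻¹` by the power
of `x`. -/
def subMinEquiv : ℤ × ℕ ≃ ℕ × ℕ where
  toFun p := (p.2 + p.1.toNat, p.2 + (-p.1).toNat)
  invFun q := ((q.1 : ℤ) - q.2, min q.1 q.2)
  left_inv := by
    rintro ⟨k, l⟩
    simp only [Prod.mk.injEq]
    omega
  right_inv := by
    rintro ⟨a, b⟩
    simp only [Prod.mk.injEq]
    omega

lemma pow_mul_inv_pow_toNat {M : Type*} [Monoid M] (x : Mˣ) (k : ℤ) (l : ℕ) :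
    (x : M) ^ (l + k.toNat) * ((x⁻¹ : Mˣ) : M) ^ (l + (-k).toNat) = ((x ^ k : Mˣ) : M) := by
  have hk : ((l + k.toNat : ℕ) : ℤ) + -((l + (-k).toNat : ℕ) : ℤ) = k := by omega
  rw [← Units.val_pow_eq_pow_val, ← Units.val_pow_eq_pow_val, ← Units.val_mul, ← zpow_natCast,
    ← zpow_natCast, inv_zpow', ← zpow_add, hk]

lemma besselTerm_eq_mul (t : ℝ) (k : ℤ) (l : ℕ) :
    besselTerm t k l = ((l + k.toNat).factorial : ℝ)⁻¹ * t ^ (l + k.toNat) *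
      (((l + (-k).toNat).factorial : ℝ)⁻¹ * t ^ (l + (-k).toNat)) := by
  have hexponent : 2 * l + k.natAbs = (l + k.toNat) + (l + (-k).toNat) := by omega
  have hfactorial : (l.factorial : ℝ) * ((l + k.natAbs).factorial : ℝ) =
      ((l + k.toNat).factorial : ℝ) * ((l + (-k).toNat).factorial : ℝ) := by
    rcases le_total 0 k with hk | hk
    · rw [show k.toNat = k.natAbs by omega, show (-k).toNat = 0 by omega, add_zero, mul_comm]
    · rw [show k.toNat = 0 by omega, show (-k).toNat = k.natAbs by omega, add_zero]
  rw [besselTerm, hfactorial, hexponent, pow_add, div_eq_mul_inv, mul_inv]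
  ring

lemma hasSum_besselTerm_smul_zpow (t : ℝ) (x : Rˣ) :
    HasSum (fun p : ℤ × ℕ => besselTerm t p.1 p.2 • ((x ^ p.1 : Rˣ) : R))
      (NormedSpace.exp (t • (x : R)) * NormedSpace.exp (t • ((x⁻¹ : Rˣ) : R))) := by
  have hseries (y : R) : HasSum (fun n : ℕ => (n.factorial : ℝ)⁻¹ • (t • y) ^ n)
      (NormedSpace.exp (t • y)) := NormedSpace.exp_series_hasSum_exp' _
  have hnorm (y : R) : Summable fun n : ℕ => ‖(n.factorial : ℝ)⁻¹ • (t • y) ^ n‖ :=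
    NormedSpace.norm_expSeries_summable' _
  have hprod := hasSum_mul_of_summable_norm (hseries x) (hseries (x⁻¹ : Rˣ)) (hnorm x)
    (hnorm (x⁻¹ : Rˣ))
  refine (subMinEquiv.hasSum_iff.2 hprod).congr_fun fun p => ?_
  simp only [Function.comp_apply, subMinEquiv, Equiv.coe_fn_mk, smul_pow, smul_smul,
    smul_mul_smul_comm, pow_mul_inv_pow_toNat, besselTerm_eq_mul]

lemma summable_besselTerm (t : ℝ) (k : ℤ) : Summable (besselTerm t k) := by
  simpa using (hasSum_besselTerm_smul_zpow (R := ℝ) t 1).summable.prod_factor k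

theorem hasSum_besselI_smul_zpow (t : ℝ) (x : Rˣ) :
    HasSum (fun k : ℤ => besselI k (2 * t) • ((x ^ k : Rˣ) : R))
      (NormedSpace.exp (t • ((x : R) + ((x⁻¹ : Rˣ) : R)))) := by
  let _ := NormedAlgebra.restrictScalars ℚ ℝ R
  have hcomm : Commute (x : R) ((x⁻¹ : Rˣ) : R) := by simp [Commute, SemiconjBy]
  rw [smul_add, NormedSpace.exp_add_of_commute ((hcomm.smul_right t).smul_left t)]
  refine (hasSum_besselTerm_smul_zpow t x).prod_fiberwise fun k => ?_
  rw [besselI_two_mul]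
  exact (summable_besselTerm t k).hasSum.smul_const _

lemma besselI_nonneg {t : ℝ} (ht : 0 ≤ t) (k : ℤ) : 0 ≤ besselI k (2 * t) := by
  rw [besselI_two_mul]
  exact tsum_nonneg (besselTerm_nonneg ht k)

lemma one_le_besselI_zero {t : ℝ} (ht : 0 ≤ t) : 1 ≤ besselI 0 (2 * t) := by
  rw [besselI_two_mul]
  simpa [besselTerm] using
    (summable_besselTerm t 0).le_tsum 0 fun l _ => besselTerm_nonneg ht 0 l

lemma measurable_besselI (k : ℤ) : Measurable fun t : ℝ => besselI k (2 * t) := by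
  refine measurable_of_tendsto_metrizable
    (f := fun n t => ∑ l ∈ Finset.range n, besselTerm t k l) (fun n => ?_) ?_
  · unfold besselTerm
    fun_prop
  · refine tendsto_pi_nhds.2 fun t => ?_
    rw [besselI_two_mul]
    exact (summable_besselTerm t k).hasSum.tendsto_sum_nat

lemma summable_besselI (t : ℝ) : Summable fun k : ℤ => besselI k (2 * t) := by
  simpa using (hasSum_besselI_smul_zpow (R := ℝ) t 1).summable

lemma summable_prod_besselI (t : ℝ) :
    ∀ n : ℕ, Summable fun m : Fin n → ℤ => ∏ i, besselI (m i) (2 * t)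
  | 0 => (hasSum_fintype _).summable
  | n + 1 => by
    rw [← (Fin.consEquiv fun _ : Fin (n + 1) => ℤ).summable_iff]
    refine (summable_mul_of_summable_norm (summable_besselI t).norm
      (summable_prod_besselI t n).norm).congr fun ⟨k, m⟩ => ?_
    simp [Fin.consEquiv, Fin.prod_univ_succ]

lemma summable_norm_smul_of_norm_le_one {α E : Type*} [SeminormedAddCommGroup E]
    [NormedSpace ℝ E] {c : α → ℝ} (hc : Summable c) {a : α → E} (ha : ∀ i, ‖a i‖ ≤ 1) :
    Summable fun i => ‖c i • a i‖ :=
  hc.norm.of_nonneg_of_le (fun _ => norm_nonneg _) fun i => by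
    rw [norm_smul]
    exact mul_le_of_le_one_right (norm_nonneg _) (ha i)

open Multiplicative in
theorem hasSum_prod_besselI_smul {V : Type*} [AddCommGroup V] (S : Multiplicative V →* R)
    (hS : ∀ a, ‖S a‖ ≤ 1) (t : ℝ) : ∀ {n : ℕ} (f : Fin n → V),
    HasSum (fun m : Fin n → ℤ => (∏ i, besselI (m i) (2 * t)) • S (ofAdd (∑ i, m i • f i)))
      (NormedSpace.exp (t • ∑ i, (S (ofAdd (f i)) + S (ofAdd (-f i)))))
  | 0, f => by
    let _ := NormedAlgebra.restrictScalars ℚ ℝ R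
    simp
  | n + 1, f => by
    let _ := NormedAlgebra.restrictScalars ℚ ℝ R
    have hhead : HasSum (fun k : ℤ => besselI k (2 * t) • S (ofAdd (k • f 0)))
        (NormedSpace.exp (t • (S (ofAdd (f 0)) + S (ofAdd (-f 0))))) := by
      simpa only [← map_zpow, ← map_inv, ← ofAdd_zsmul, ← ofAdd_neg, MonoidHom.coe_toHomUnits]
        using hasSum_besselI_smul_zpow t (S.toHomUnits (ofAdd (f 0)))
    have htail := hasSum_prod_besselI_smul S hS t fun i => f i.succ
    have hcomm (a b : Multiplicative V) : Commute (S a) (S b) := (Commute.all a b).map S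
    rw [Fin.sum_univ_succ, smul_add, NormedSpace.exp_add_of_commute (Commute.smul_left
      (Commute.smul_right (Commute.sum_right _ _ _ fun i _ => Commute.add_left
        ((hcomm _ _).add_right (hcomm _ _)) ((hcomm _ _).add_right (hcomm _ _))) _) _),
      ← (Fin.consEquiv fun _ : Fin (n + 1) => ℤ).hasSum_iff]
    refine (hasSum_mul_of_summable_norm hhead htail
      (summable_norm_smul_of_norm_le_one (summable_besselI t) fun _ => hS _)
      (summable_norm_smul_of_norm_le_one (summable_prod_besselI t n) fun _ => hS _)).congr_fun
        fun p => ?_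
    simp only [Function.comp_apply, Fin.consEquiv_apply, Fin.prod_univ_succ, Fin.sum_univ_succ,
      Fin.cons_zero, Fin.cons_succ, ofAdd_add, map_mul, smul_mul_smul_comm]

end Bessel

section HeatKernel

variable {d : ℕ}

open Multiplicative in
theorem hasSum_heatG_smul {R : Type*} [NormedRing R] [NormedAlgebra ℝ R] [CompleteSpace R]
    (S : Multiplicative (Fin d → ℤ) →* R) (hS : ∀ a, ‖S a‖ ≤ 1) (t : ℝ) :
    HasSum (fun m => heatG d m t • S (ofAdd m)) (NormedSpace.exp (t • ∑ i : Fin d,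
      (S (ofAdd (Pi.single i 1)) + S (ofAdd (-Pi.single i 1)) - 2))) := by
  let _ := NormedAlgebra.restrictScalars ℚ ℝ R
  have hexp : NormedSpace.exp (t • ∑ i : Fin d,
      (S (ofAdd (Pi.single i 1)) + S (ofAdd (-Pi.single i 1)) - 2)) =
      Real.exp (-(2 * (d : ℝ) * t)) • NormedSpace.exp (t • ∑ i : Fin d,
        (S (ofAdd (Pi.single i 1)) + S (ofAdd (-Pi.single i 1)))) := by
    have hscalar : t • ∑ _i : Fin d, (-2 : R) = algebraMap ℝ R (-(2 * (d : ℝ) * t)) := by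
      rw [Algebra.algebraMap_eq_smul_one, Finset.sum_const, Finset.card_univ, Fintype.card_fin,
        ← Nat.cast_smul_eq_nsmul ℝ, show (-2 : R) = (-2 : ℝ) • 1 by simp [ofNat_smul_eq_nsmul],
        smul_smul, smul_smul]
      congr 1
      ring
    simp_rw [sub_eq_add_neg, Finset.sum_add_distrib (g := fun _ => (-2 : R)), smul_add]
    rw [hscalar, add_comm, NormedSpace.exp_add_of_commute (Algebra.commutes _ _),
      ← NormedSpace.algebraMap_exp_comm, ← Real.exp_eq_exp_ℝ, ← Algebra.smul_def]
  rw [hexp]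
  refine ((hasSum_prod_besselI_smul S hS t fun i => Pi.single i 1).const_smul _).congr_fun
    fun m => ?_
  have hm : ∑ i, m i • (Pi.single i 1 : Fin d → ℤ) = m := by
    ext j
    simp [Finset.sum_apply, Pi.single_apply]
  rw [heatG, mul_smul, hm]

lemma hasSum_heatG (t : ℝ) : HasSum (fun m : Fin d → ℤ => heatG d m t) 1 := by
  simpa [one_add_one_eq_two] using hasSum_heatG_smul (R := ℝ) (d := d) 1 (by simp) t

lemma heatG_nonneg {t : ℝ} (ht : 0 ≤ t) (m : Fin d → ℤ) : 0 ≤ heatG d m t :=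
  mul_nonneg (Real.exp_pos _).le (Finset.prod_nonneg fun _ _ => besselI_nonneg ht _)

lemma measurable_heatG (m : Fin d → ℤ) : Measurable (heatG d m) :=
  Measurable.mul (by fun_prop) (Finset.measurable_fun_prod _ fun i _ => measurable_besselI (m i))

lemma one_sub_heatG_zero_le {t : ℝ} (ht : 0 ≤ t) : 1 - heatG d 0 t ≤ 2 * d * t := by
  have hprod : 1 ≤ ∏ i : Fin d, besselI ((0 : Fin d → ℤ) i) (2 * t) := by
    simpa using Finset.prod_le_prod (s := Finset.univ) (fun _ _ => zero_le_one)
      fun (_ : Fin d) _ => one_le_besselI_zero ht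
  have hexp : Real.exp (-(2 * (d : ℝ) * t)) ≤ heatG d 0 t :=
    le_mul_of_one_le_right (Real.exp_pos _).le hprod
  linarith [Real.add_one_le_exp (-(2 * (d : ℝ) * t))]

/-- The heat kernel with its value at the origin removed, which is what enters `K_s^h`. -/
noncomputable def offDiagHeatG (d : ℕ) (m : Fin d → ℤ) (t : ℝ) : ℝ :=
  if m = 0 then 0 else heatG d m t

lemma offDiagHeatG_nonneg {t : ℝ} (ht : 0 ≤ t) (m : Fin d → ℤ) : 0 ≤ offDiagHeatG d m t := by
  unfold offDiagHeatG
  split_ifs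
  exacts [le_rfl, heatG_nonneg ht m]

lemma measurable_offDiagHeatG (m : Fin d → ℤ) : Measurable (offDiagHeatG d m) := by
  unfold offDiagHeatG
  split_ifs
  exacts [measurable_const, measurable_heatG m]

lemma hasSum_offDiagHeatG (t : ℝ) :
    HasSum (fun m => offDiagHeatG d m t) (1 - heatG d 0 t) := by
  refine ((hasSum_heatG t).sub (hasSum_ite_eq (0 : Fin d → ℤ) (heatG d 0 t))).congr_fun
    fun m => ?_
  unfold offDiagHeatG
  split_ifs with hm
  · rw [hm, sub_self]
  · rw [sub_zero]

end HeatKernel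

section SquareSummable

variable {α β : Type*}

lemma memℓp_two_iff_summable_sq {x : α → ℝ} : Memℓp x 2 ↔ Summable fun j => x j ^ 2 := by
  simp [memℓp_gen_iff]

lemma norm_sq_eq_tsum (x : ℓ²(α, ℝ)) : ‖x‖ ^ 2 = ∑' j, x j ^ 2 := by
  rw [← real_inner_self_eq_norm_sq, lp.inner_eq_tsum]
  simp [sq]

/-- The isometry `x ↦ x ∘ e` of `ℓ²` spaces induced by a bijection `e`. -/
def reindex (e : α ≃ β) : ℓ²(β, ℝ) →ₗᵢ[ℝ] ℓ²(α, ℝ) where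
  toFun x := ⟨x ∘ e, memℓp_two_iff_summable_sq.2
    (e.summable_iff.2 (memℓp_two_iff_summable_sq.1 x.2))⟩
  map_add' _ _ := rfl
  map_smul' _ _ := rfl
  norm_map' x := by
    rw [← sq_eq_sq₀ (norm_nonneg _) (norm_nonneg _), norm_sq_eq_tsum, norm_sq_eq_tsum]
    exact e.tsum_eq fun j => x j ^ 2

@[simp]
lemma reindex_apply (e : α ≃ β) (x : ℓ²(β, ℝ)) (j : α) : reindex e x j = x (e j) := rfl

lemma inner_reindex_left (e : α ≃ β) (x : ℓ²(β, ℝ)) (y : ℓ²(α, ℝ)) :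
    ⟪reindex e x, y⟫_ℝ = ⟪x, reindex e.symm y⟫_ℝ := by
  rw [← (reindex e).inner_map_map x]
  congr 1
  ext j
  simp

/-- The orthogonal projection of `ℓ²` onto the sequences supported in `s`. -/
noncomputable def indicatorCLM (s : Set α) : ℓ²(α, ℝ) →L[ℝ] ℓ²(α, ℝ) :=
  LinearMap.mkContinuous
    { toFun := fun x => ⟨s.indicator x, (lp.memℓp x).mono' fun _ => norm_indicator_le_norm_self _ _⟩
      map_add' := fun x y => lp.ext (s.indicator_add x y)
      map_smul' := fun c x => lp.ext (s.indicator_const_smul c x) } 1 fun x => by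
    rw [one_mul]
    exact lp.norm_mono two_ne_zero fun _ => norm_indicator_le_norm_self _ _

variable (s : Set α) (x y : ℓ²(α, ℝ))

open scoped Classical in
@[simp]
lemma indicatorCLM_apply (j : α) : indicatorCLM s x j = if j ∈ s then x j else 0 := rfl

lemma norm_indicatorCLM_le : ‖indicatorCLM s x‖ ≤ ‖x‖ :=
  lp.norm_mono two_ne_zero fun _ => norm_indicator_le_norm_self _ _

lemma indicatorCLM_idem : indicatorCLM s (indicatorCLM s x) = indicatorCLM s x := by
  ext j
  simp +contextual

lemma inner_indicatorCLM_left : ⟪indicatorCLM s x, y⟫_ℝ = ⟪x, indicatorCLM s y⟫_ℝ := by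
  rw [lp.inner_eq_tsum, lp.inner_eq_tsum]
  refine tsum_congr fun j => ?_
  by_cases hj : j ∈ s <;> simp [hj]

lemma inner_indicatorCLM_indicatorCLM :
    ⟪indicatorCLM s x, indicatorCLM s y⟫_ℝ = ⟪indicatorCLM s x, y⟫_ℝ := by
  rw [← inner_indicatorCLM_left, indicatorCLM_idem]

variable {s x} in
lemma indicatorCLM_eq_zero_iff : indicatorCLM s x = 0 ↔ ∀ j ∈ s, x j = 0 := by
  refine ⟨fun h j hj => by simpa [hj] using congrArg (fun z => z j) h, fun h => ?_⟩
  ext j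
  by_cases hj : j ∈ s <;> simp [hj, h]

end SquareSummable

section Shift

variable {G : Type*} [AddGroup G]

/-- Translation by `a`: `(shift a x) j = x (j - a)`. -/
noncomputable def shift (a : G) : ℓ²(G, ℝ) →L[ℝ] ℓ²(G, ℝ) :=
  (reindex (Equiv.subRight a)).toContinuousLinearMap

@[simp]
lemma shift_apply (a : G) (x : ℓ²(G, ℝ)) (j : G) : shift a x j = x (j - a) := rfl

@[simp]
lemma norm_shift_apply (a : G) (x : ℓ²(G, ℝ)) : ‖shift a x‖ = ‖x‖ :=
  (reindex (Equiv.subRight a)).norm_map x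

lemma norm_shift_le_one (a : G) : ‖shift a‖ ≤ 1 :=
  LinearIsometry.norm_toContinuousLinearMap_le _

lemma inner_shift_left (a : G) (x y : ℓ²(G, ℝ)) : ⟪shift a x, y⟫_ℝ = ⟪x, shift (-a) y⟫_ℝ := by
  refine (inner_reindex_left _ x y).trans (congrArg _ ?_)
  ext j
  simp

/-- Translations of a commutative group as a representation on `ℓ²`. -/
noncomputable def shiftHom (G : Type*) [AddCommGroup G] :
    Multiplicative G →* (ℓ²(G, ℝ) →L[ℝ] ℓ²(G, ℝ)) where
  toFun a := shift a.toAdd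
  map_one' := by
    ext x j
    simp
  map_mul' a b := by
    ext x j
    simp [sub_sub]

end Shift

section Laplacian

variable {ι : Type*} [Fintype ι] [DecidableEq ι]

variable (ι) in
/-- The discrete Laplacian `Δ x_j = ∑_i (x_{j - e_i} + x_{j + e_i} - 2 x_j)` on `ℓ²(ℤ^ι)`. -/
noncomputable def latticeLaplacian : ℓ²(ι → ℤ, ℝ) →L[ℝ] ℓ²(ι → ℤ, ℝ) :=
  ∑ i, (shift (Pi.single i 1) + shift (-Pi.single i 1) - 2)

local notation "Δ" => latticeLaplacian ι

lemma latticeLaplacian_apply (x : ℓ²(ι → ℤ, ℝ)) : Δ x =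
    ∑ i, (shift (Pi.single i 1) x + shift (-Pi.single i 1) x - (x + x)) := by
  simp only [latticeLaplacian, sum_apply, sub_apply, add_apply, ← one_add_one_eq_two,
    one_apply_eq_self]

lemma inner_latticeLaplacian_left (x y : ℓ²(ι → ℤ, ℝ)) : ⟪Δ x, y⟫_ℝ = ⟪x, Δ y⟫_ℝ := by
  simp only [latticeLaplacian_apply, sum_inner, inner_sum, inner_sub_left, inner_sub_right,
    inner_add_left, inner_add_right, inner_shift_left, neg_neg]
  exact Finset.sum_congr rfl fun i _ => by ring

lemma inner_latticeLaplacian_self (x : ℓ²(ι → ℤ, ℝ)) :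
    ⟪Δ x, x⟫_ℝ = -∑ i, ‖shift (Pi.single i 1) x - x‖ ^ 2 := by
  rw [latticeLaplacian_apply, sum_inner, ← Finset.sum_neg_distrib]
  refine Finset.sum_congr rfl fun i _ => ?_
  rw [inner_sub_left, inner_add_left, inner_add_left, inner_shift_left (-_), neg_neg,
    norm_sub_sq_real, norm_shift_apply, real_inner_comm (shift _ x), real_inner_self_eq_norm_sq]
  ring

lemma hasSum_heatG_smul_shift {d : ℕ} (t : ℝ) :
    HasSum (fun m : Fin d → ℤ => heatG d m t • shift m)
      (NormedSpace.exp (t • latticeLaplacian (Fin d))) :=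
  hasSum_heatG_smul (shiftHom (Fin d → ℤ)) (fun a => norm_shift_le_one a.toAdd) t

lemma norm_exp_smul_latticeLaplacian_le_one {d : ℕ} {t : ℝ} (ht : 0 ≤ t) :
    ‖NormedSpace.exp (t • latticeLaplacian (Fin d))‖ ≤ 1 :=
  (hasSum_heatG_smul_shift t).norm_le_of_bounded (hasSum_heatG t) fun m => by
    rw [norm_smul, Real.norm_of_nonneg (heatG_nonneg ht m)]
    exact mul_le_of_le_one_right (heatG_nonneg ht m) (norm_shift_le_one m)

end Laplacian

section HalfSpace

variable {ι : Type*}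

/-- The half-space `{p | n ≤ p_l}` of the lattice `ℤ^ι`. -/
def halfSpace (l : ι) (n : ℤ) : Set (ι → ℤ) := {p | n ≤ p l}

/-- The hyperplane `{p | p_l = k}` of the lattice `ℤ^ι`. -/
def slab (l : ι) (k : ℤ) : Set (ι → ℤ) := {p | p l = k}

@[simp]
lemma mem_halfSpace {l : ι} {n : ℤ} {p : ι → ℤ} : p ∈ halfSpace l n ↔ n ≤ p l := Iff.rfl

@[simp]
lemma mem_slab {l : ι} {k : ℤ} {p : ι → ℤ} : p ∈ slab l k ↔ p l = k := Iff.rfl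

/-- The `ℓ²` norm of `x` on the hyperplane `p_l = k`. -/
noncomputable def slabNorm (l : ι) (x : ℓ²(ι → ℤ, ℝ)) (k : ℤ) : ℝ := ‖indicatorCLM (slab l k) x‖

lemma slabNorm_eq_zero_iff {l : ι} {x : ℓ²(ι → ℤ, ℝ)} {k : ℤ} :
    slabNorm l x k = 0 ↔ ∀ p, p l = k → x p = 0 := by
  rw [slabNorm, norm_eq_zero, indicatorCLM_eq_zero_iff]
  rfl

variable [DecidableEq ι]

/-- The reflection `p_l ↦ 2n - 1 - p_l`, which exchanges `halfSpace l n` with its complement. -/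
def reflection (l : ι) (n : ℤ) : (ι → ℤ) ≃ (ι → ℤ) where
  toFun p := Function.update p l (2 * n - 1 - p l)
  invFun p := Function.update p l (2 * n - 1 - p l)
  left_inv p := by simp
  right_inv p := by simp

@[simp]
lemma reflection_apply (l : ι) (n : ℤ) (p : ι → ℤ) :
    reflection l n p = Function.update p l (2 * n - 1 - p l) := rfl

variable (l : ι) (n : ℤ)

lemma indicatorCLM_slab_shift_single (x : ℓ²(ι → ℤ, ℝ)) (k : ℤ) :
    indicatorCLM (slab l k) (shift (Pi.single l 1) x) =
      shift (Pi.single l 1) (indicatorCLM (slab l (k - 1)) x) := by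
  ext p
  simp

lemma norm_indicatorCLM_slab_shift_single (x : ℓ²(ι → ℤ, ℝ)) (k : ℤ) :
    ‖indicatorCLM (slab l k) (shift (Pi.single l 1) x)‖ = slabNorm l x (k - 1) := by
  rw [indicatorCLM_slab_shift_single, norm_shift_apply, slabNorm]

lemma indicatorCLM_slab_shift_neg_single (x : ℓ²(ι → ℤ, ℝ)) (k : ℤ) :
    indicatorCLM (slab l (k - 1)) (shift (-Pi.single l 1) x) =
      shift (-Pi.single l 1) (indicatorCLM (slab l k) x) := by
  ext p
  simp [eq_sub_iff_add_eq]

lemma indicatorCLM_slab_reindex_reflection (x : ℓ²(ι → ℤ, ℝ)) :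
    indicatorCLM (slab l n) (reindex (reflection l n) x) =
      indicatorCLM (slab l n) (shift (Pi.single l 1) x) := by
  ext p
  simp only [indicatorCLM_apply, mem_slab, reindex_apply, shift_apply]
  split_ifs with hp
  · refine congrArg x (funext fun i => ?_)
    rcases eq_or_ne i l with rfl | hi
    · simp only [reflection_apply, Function.update_self, Pi.sub_apply, Pi.single_eq_same]
      omega
    · simp [hi]
  · rfl

lemma indicatorCLM_slab_pred_reindex_reflection (x : ℓ²(ι → ℤ, ℝ)) :
    indicatorCLM (slab l (n - 1)) (reindex (reflection l n) x) =
      indicatorCLM (slab l (n - 1)) (shift (-Pi.single l 1) x) := by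
  ext p
  simp only [indicatorCLM_apply, mem_slab, reindex_apply, shift_apply]
  split_ifs with hp
  · refine congrArg x (funext fun i => ?_)
    rcases eq_or_ne i l with rfl | hi
    · simp only [reflection_apply, Function.update_self, Pi.sub_apply, Pi.neg_apply,
        Pi.single_eq_same]
      omega
    · simp [hi]
  · rfl

lemma reindex_reflection_shift_single (i : ι) (a : ℤ) (x : ℓ²(ι → ℤ, ℝ)) :
    reindex (reflection l n) (shift (Pi.single i a) x) =
      shift (Pi.single i (if i = l then -a else a)) (reindex (reflection l n) x) := by
  ext p
  simp only [reindex_apply, shift_apply, reflection_apply]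
  refine congrArg x (funext fun j => ?_)
  rcases eq_or_ne j l with rfl | hj
  · rcases eq_or_ne i j with rfl | hi
    · simp only [Pi.sub_apply, Function.update_self, Pi.single_eq_same, if_true]
      ring
    · simp [Pi.single_eq_of_ne' hi]
  · rcases eq_or_ne i j with rfl | hi
    · simp [hj]
    · simp [hj, Pi.single_eq_of_ne' hi]

lemma indicatorCLM_halfSpace_shift_single (i : ι) (x : ℓ²(ι → ℤ, ℝ)) :
    indicatorCLM (halfSpace l n) (shift (Pi.single i 1) x) =
      shift (Pi.single i 1) (indicatorCLM (halfSpace l n) x) +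
        if i = l then indicatorCLM (slab l n) (shift (Pi.single i 1) x) else 0 := by
  ext p
  rcases eq_or_ne i l with rfl | hi
  · simp only [indicatorCLM_apply, shift_apply, mem_halfSpace, mem_slab, if_true, lp.coeFn_add,
      Pi.add_apply, Pi.sub_apply, Pi.single_eq_same]
    split_ifs <;> first | omega | simp
  · simp [hi]

lemma indicatorCLM_halfSpace_shift_neg_single (i : ι) (x : ℓ²(ι → ℤ, ℝ)) :
    indicatorCLM (halfSpace l n) (shift (-Pi.single i 1) x) =
      shift (-Pi.single i 1) (indicatorCLM (halfSpace l n) x) -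
        if i = l then indicatorCLM (slab l (n - 1)) (shift (-Pi.single i 1) x) else 0 := by
  ext p
  rcases eq_or_ne i l with rfl | hi
  · simp only [indicatorCLM_apply, shift_apply, mem_halfSpace, mem_slab, if_true, lp.coeFn_sub,
      Pi.sub_apply, Pi.neg_apply, Pi.single_eq_same]
    split_ifs <;> first | omega | simp
  · simp [hi]

variable {l n} in
lemma inner_reindex_reflection_eq_inner_indicatorCLM {u : ℓ²(ι → ℤ, ℝ)}
    (hu : ∀ p ∈ halfSpace l n, u p = 0) (x : ℓ²(ι → ℤ, ℝ)) :
    ⟪reindex (reflection l n) u, x⟫_ℝ =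
      ⟪reindex (reflection l n) u, indicatorCLM (halfSpace l n) x⟫_ℝ := by
  rw [← inner_indicatorCLM_left]
  congr 1
  ext p
  by_cases hp : p ∈ halfSpace l n
  · simp [hp]
  · have : reflection l n p ∈ halfSpace l n := by
      simp only [mem_halfSpace, not_le, reflection_apply, Function.update_self] at hp ⊢
      omega
    rw [indicatorCLM_apply, if_neg hp, reindex_apply, hu _ this]

section

variable [Fintype ι]

local notation "Δ" => latticeLaplacian ι

lemma reindex_reflection_latticeLaplacian (x : ℓ²(ι → ℤ, ℝ)) :
    reindex (reflection l n) (Δ x) = Δ (reindex (reflection l n) x) := by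
  simp only [latticeLaplacian_apply, map_sum, map_sub, map_add]
  refine Finset.sum_congr rfl fun i _ => ?_
  simp only [← Pi.single_neg, reindex_reflection_shift_single]
  split_ifs
  · rw [neg_neg, add_comm (shift _ _)]
  · rfl

lemma indicatorCLM_halfSpace_latticeLaplacian (x : ℓ²(ι → ℤ, ℝ)) :
    indicatorCLM (halfSpace l n) (Δ x) = Δ (indicatorCLM (halfSpace l n) x) +
      (indicatorCLM (slab l n) (shift (Pi.single l 1) x) -
        indicatorCLM (slab l (n - 1)) (shift (-Pi.single l 1) x)) := by
  simp only [latticeLaplacian_apply, map_sum, map_sub, map_add,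
    indicatorCLM_halfSpace_shift_single, indicatorCLM_halfSpace_shift_neg_single]
  simp only [Finset.sum_add_distrib, Finset.sum_sub_distrib, Finset.sum_ite_eq',
    Finset.mem_univ, if_true]
  abel

variable {l n} {μ : ℝ} {u v : ℓ²(ι → ℤ, ℝ)}

lemma smul_sub_latticeLaplacian_indicatorCLM (hv : μ • v - Δ v = u)
    (hu : ∀ p ∈ halfSpace l n, u p = 0) :
    μ • indicatorCLM (halfSpace l n) v - Δ (indicatorCLM (halfSpace l n) v) =
      indicatorCLM (slab l n) (shift (Pi.single l 1) v) -
        indicatorCLM (slab l (n - 1)) (shift (-Pi.single l 1) v) := by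
  have hPu : μ • indicatorCLM (halfSpace l n) v - indicatorCLM (halfSpace l n) (Δ v) = 0 := by
    rw [← map_smul, ← map_sub, hv, indicatorCLM_eq_zero_iff.2 hu]
  rw [indicatorCLM_halfSpace_latticeLaplacian, ← sub_sub, sub_eq_zero] at hPu
  exact hPu

theorem inner_reindex_reflection_eq_slabNorm_sq_sub (hv : μ • v - Δ v = u)
    (hu : ∀ p ∈ halfSpace l n, u p = 0) :
    ⟪reindex (reflection l n) u, v⟫_ℝ = slabNorm l v (n - 1) ^ 2 - slabNorm l v n ^ 2 := by
  set w := reindex (reflection l n) v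
  have hRu : reindex (reflection l n) u = μ • w - Δ w := by
    rw [← hv, map_sub, map_smul, reindex_reflection_latticeLaplacian]
  calc ⟪reindex (reflection l n) u, v⟫_ℝ
      = ⟪w, μ • indicatorCLM (halfSpace l n) v - Δ (indicatorCLM (halfSpace l n) v)⟫_ℝ := by
        rw [inner_reindex_reflection_eq_inner_indicatorCLM hu, hRu, inner_sub_left,
          inner_sub_right, real_inner_smul_left, real_inner_smul_right, inner_latticeLaplacian_left]
    _ = ⟪indicatorCLM (slab l n) w, shift (Pi.single l 1) v⟫_ℝ -
          ⟪indicatorCLM (slab l (n - 1)) w, shift (-Pi.single l 1) v⟫_ℝ := by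
        rw [smul_sub_latticeLaplacian_indicatorCLM hv hu, inner_sub_right,
          inner_indicatorCLM_left, inner_indicatorCLM_left]
    _ = slabNorm l v (n - 1) ^ 2 - slabNorm l v n ^ 2 := by
        rw [indicatorCLM_slab_reindex_reflection, indicatorCLM_slab_pred_reindex_reflection,
          ← inner_indicatorCLM_indicatorCLM, ← inner_indicatorCLM_indicatorCLM (slab l (n - 1)),
          real_inner_self_eq_norm_sq, real_inner_self_eq_norm_sq,
          norm_indicatorCLM_slab_shift_single, indicatorCLM_slab_shift_neg_single,
          norm_shift_apply, slabNorm, slabNorm]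

theorem energy_le_slabNorm_mul_slabNorm (hv : μ • v - Δ v = u)
    (hu : ∀ p ∈ halfSpace l n, u p = 0) :
    μ * ‖indicatorCLM (halfSpace l n) v‖ ^ 2 + slabNorm l v n ^ 2 ≤
      slabNorm l v (n - 1) * slabNorm l v n := by
  set f := indicatorCLM (halfSpace l n) v with hf
  have hjump : indicatorCLM (slab l n) (shift (Pi.single l 1) f - f) =
      -indicatorCLM (slab l n) v := by
    ext p
    by_cases hp : p l = n <;> simp [hf, hp]
  have hDirichlet : slabNorm l v n ^ 2 ≤ -⟪Δ f, f⟫_ℝ := by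
    calc slabNorm l v n ^ 2 = ‖indicatorCLM (slab l n) (shift (Pi.single l 1) f - f)‖ ^ 2 := by
          rw [hjump, norm_neg, slabNorm]
      _ ≤ ‖shift (Pi.single l 1) f - f‖ ^ 2 := by gcongr; exact norm_indicatorCLM_le _ _
      _ ≤ ∑ i, ‖shift (Pi.single i 1) f - f‖ ^ 2 :=
          Finset.single_le_sum (f := fun i => ‖shift (Pi.single i 1) f - f‖ ^ 2)
            (fun _ _ => sq_nonneg _) (Finset.mem_univ l)
      _ = -⟪Δ f, f⟫_ℝ := by rw [inner_latticeLaplacian_self, neg_neg]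
  have hPf : indicatorCLM (slab l n) f = indicatorCLM (slab l n) v := by
    ext p
    by_cases hp : p l = n <;> simp [hf, hp]
  have hPf' : indicatorCLM (slab l (n - 1)) f = 0 :=
    indicatorCLM_eq_zero_iff.2 fun p hp => by
      rw [mem_slab] at hp
      simp [hf, hp]
  calc μ * ‖f‖ ^ 2 + slabNorm l v n ^ 2
      ≤ ⟪μ • f - Δ f, f⟫_ℝ := by
        rw [inner_sub_left, real_inner_smul_left, real_inner_self_eq_norm_sq]
        linarith
    _ = ⟪indicatorCLM (slab l n) (shift (Pi.single l 1) v), indicatorCLM (slab l n) v⟫_ℝ := by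
        rw [smul_sub_latticeLaplacian_indicatorCLM hv hu, inner_sub_left,
          ← inner_indicatorCLM_indicatorCLM, ← inner_indicatorCLM_indicatorCLM (slab l (n - 1)),
          hPf, hPf', inner_zero_right, sub_zero]
    _ ≤ slabNorm l v (n - 1) * slabNorm l v n := by
        rw [← norm_indicatorCLM_slab_shift_single]
        exact real_inner_le_norm _ _

end

end HalfSpace

section Descent

variable {ι : Type*} [Fintype ι] [DecidableEq ι] {l : ι} {n : ℤ} {μ : ℝ} {u v : ℓ²(ι → ℤ, ℝ)}

local notation "Δ" => latticeLaplacian ι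

lemma slabNorm_le_slabNorm_sub_one (hμ : 0 ≤ μ) (hv : μ • v - Δ v = u)
    (hu : ∀ p ∈ halfSpace l n, u p = 0) : slabNorm l v n ≤ slabNorm l v (n - 1) := by
  have henergy := energy_le_slabNorm_mul_slabNorm hv hu
  have hmass : 0 ≤ μ * ‖indicatorCLM (halfSpace l n) v‖ ^ 2 := by positivity
  have hnonneg (k : ℤ) : 0 ≤ slabNorm l v k := norm_nonneg _
  rcases (hnonneg n).eq_or_lt with h | h
  · exact h ▸ hnonneg (n - 1)
  · exact le_of_mul_le_mul_right (by linarith) h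

lemma eq_zero_of_slabNorm_sub_one_eq (hμ : 0 < μ) (hv : μ • v - Δ v = u)
    (hu : ∀ p ∈ halfSpace l n, u p = 0) (heq : slabNorm l v (n - 1) = slabNorm l v n) :
    ∀ p ∈ halfSpace l (n - 1), v p = 0 := by
  have henergy := energy_le_slabNorm_mul_slabNorm hv hu
  have hmass : ‖indicatorCLM (halfSpace l n) v‖ = 0 := by
    rw [heq, ← sq] at henergy
    exact pow_eq_zero_iff two_ne_zero |>.1
      (le_antisymm (nonpos_of_mul_nonpos_right (by linarith) hμ) (sq_nonneg _))
  have hhalf : ∀ p ∈ halfSpace l n, v p = 0 :=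
    indicatorCLM_eq_zero_iff.1 (norm_eq_zero.1 hmass)
  have hslab : ∀ p, p l = n - 1 → v p = 0 :=
    slabNorm_eq_zero_iff.1 (heq.trans (slabNorm_eq_zero_iff.2 fun p hp => hhalf p hp.ge))
  intro p hp
  rcases lt_or_ge (p l) n with hlt | hge
  · exact hslab p (by rw [mem_halfSpace] at hp; omega)
  · exact hhalf p hge

lemma mul_norm_le_of_smul_sub_latticeLaplacian_eq (hv : μ • v - Δ v = u) :
    μ * ‖v‖ ≤ ‖u‖ := by
  rcases (norm_nonneg v).eq_or_lt with h | h
  · rw [← h, mul_zero]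
    exact norm_nonneg u
  have hdissipative : ⟪Δ v, v⟫_ℝ ≤ 0 := by
    rw [inner_latticeLaplacian_self]
    exact neg_nonpos.2 (Finset.sum_nonneg fun _ _ => sq_nonneg _)
  refine le_of_mul_le_mul_right ?_ h
  calc μ * ‖v‖ * ‖v‖ ≤ ⟪u, v⟫_ℝ := by
        rw [← hv, inner_sub_left, real_inner_smul_left, real_inner_self_eq_norm_sq]
        linarith
    _ ≤ ‖u‖ * ‖v‖ := real_inner_le_norm u v

lemma apply_eq_neg_apply_sub_single (hv : μ • v - Δ v = u)
    (hvan : ∀ p ∈ halfSpace l n, v p = 0) {p : ι → ℤ} (hp : p l = n) :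
    u p = -v (p - Pi.single l 1) := by
  have hother : ∀ i ≠ l, v (p - Pi.single i 1) = 0 := fun i hi =>
    hvan _ (by simp [hp, hi])
  have hforward (i : ι) : v (p + Pi.single i 1) = 0 := by
    refine hvan _ ?_
    rcases eq_or_ne i l with rfl | hi <;> simp [*]
  have hΔ : Δ v p = v (p - Pi.single l 1) := by
    simp only [latticeLaplacian_apply, lp.coeFn_sum, Finset.sum_apply, lp.coeFn_sub, lp.coeFn_add,
      Pi.sub_apply, Pi.add_apply, shift_apply, sub_neg_eq_add, hforward, hvan p hp.ge,
      add_zero, sub_zero]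
    exact Fintype.sum_eq_single l hother
  rw [← hv, lp.coeFn_sub, lp.coeFn_smul, Pi.sub_apply, Pi.smul_apply, hΔ, hvan p hp.ge,
    smul_zero, zero_sub]

/-- The solution `v` of `μ v - Δ v = u` vanishes on the half-space `{n ≤ p_l}` for arbitrarily
large `μ`. Pushing `n` to `-∞` is the last step of the unique continuation argument. -/
def FrequentlyResolventVanishes (l : ι) (u : ℓ²(ι → ℤ, ℝ)) (n : ℤ) : Prop :=
  ∃ᶠ μ : ℝ in atTop, ∃ v, μ • v - Δ v = u ∧ ∀ p ∈ halfSpace l n, v p = 0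

lemma FrequentlyResolventVanishes.apply_eq_zero (h : FrequentlyResolventVanishes l u n)
    {p : ι → ℤ} (hp : p ∈ halfSpace l n) : u p = 0 := by
  by_contra hne
  obtain ⟨μ, ⟨v, hv, hvan⟩, hμ⟩ :=
    (h.and_eventually (eventually_gt_atTop (max 0 (‖u‖ / |u p|)))).exists
  rw [max_lt_iff, div_lt_iff₀ (abs_pos.2 hne)] at hμ
  have hup : |u p| ≤ ‖v‖ := by
    have hvan' : ∀ q ∈ halfSpace l (p l), v q = 0 := fun q hq =>
      hvan q (mem_halfSpace.2 (le_trans (mem_halfSpace.1 hp) (mem_halfSpace.1 hq)))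
    rw [apply_eq_neg_apply_sub_single hv hvan' rfl, abs_neg]
    exact lp.norm_apply_le_norm two_ne_zero v _
  linarith [mul_le_mul_of_nonneg_left hup hμ.1.le, mul_norm_le_of_smul_sub_latticeLaplacian_eq hv]

lemma FrequentlyResolventVanishes.sub_one (h : FrequentlyResolventVanishes l u n) :
    FrequentlyResolventVanishes l u (n - 1) := by
  refine h.mono fun μ ⟨v, hv, hvan⟩ => ⟨v, hv, fun p hp => ?_⟩
  rcases lt_or_ge (p l) n with hlt | hge
  · have hlevel : (p + Pi.single l 1 : ι → ℤ) l = n := by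
      rw [mem_halfSpace] at hp
      rw [Pi.add_apply, Pi.single_eq_same]
      omega
    have hup := apply_eq_neg_apply_sub_single hv hvan hlevel
    rwa [h.apply_eq_zero hlevel.ge, add_sub_cancel_right, zero_eq_neg] at hup
  · exact hvan p hge

theorem FrequentlyResolventVanishes.eq_zero (h : FrequentlyResolventVanishes l u n) : u = 0 := by
  have hall (k : ℕ) : FrequentlyResolventVanishes l u (n - k) := by
    induction k with
    | zero => simpa using h
    | succ k ih => simpa [sub_sub] using ih.sub_one
  ext p
  refine (hall (n - p l).toNat).apply_eq_zero ?_
  rw [mem_halfSpace]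
  omega

end Descent

section Resolvent

variable {E : Type*} [NormedAddCommGroup E] [NormedSpace ℝ E] {A : E →L[ℝ] E} {μ : ℝ}

/-- The Laplace transform at `μ` of the orbit of `x` under the semigroup generated by `A`; it is
the resolvent `(μ - A)⁻¹ x` when the semigroup is contractive and `0 < μ`. -/
noncomputable def laplaceResolvent (A : E →L[ℝ] E) (μ : ℝ) (x : E) : E :=
  ∫ t in Ioi (0 : ℝ), Real.exp (-μ * t) • NormedSpace.exp (t • A) x

lemma norm_exp_smul_exp_smul_apply_le (hA : ∀ t : ℝ, 0 ≤ t → ‖NormedSpace.exp (t • A)‖ ≤ 1)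
    (x : E) {t : ℝ} (ht : 0 ≤ t) :
    ‖Real.exp (-μ * t) • NormedSpace.exp (t • A) x‖ ≤ Real.exp (-μ * t) * ‖x‖ := by
  rw [norm_smul, Real.norm_of_nonneg (Real.exp_pos _).le]
  gcongr
  simpa using (NormedSpace.exp (t • A)).le_of_opNorm_le (hA t ht) x

lemma tendsto_exp_smul_exp_smul_apply (hA : ∀ t : ℝ, 0 ≤ t → ‖NormedSpace.exp (t • A)‖ ≤ 1)
    (x : E) (hμ : 0 < μ) :
    Tendsto (fun t : ℝ => Real.exp (-μ * t) • NormedSpace.exp (t • A) x) atTop (𝓝 0) := by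
  have hexp : Tendsto (fun t : ℝ => Real.exp (-μ * t) * ‖x‖) atTop (𝓝 0) := by
    simpa using (Real.tendsto_exp_atBot.comp
      (tendsto_id.const_mul_atTop_of_neg (neg_neg_iff_pos.2 hμ))).mul_const ‖x‖
  refine squeeze_zero_norm' ?_ hexp
  filter_upwards [eventually_ge_atTop 0] with t ht
  exact norm_exp_smul_exp_smul_apply_le hA x ht

variable [CompleteSpace E]

lemma hasDerivAt_exp_smul_apply (A : E →L[ℝ] E) (x : E) (t : ℝ) :
    HasDerivAt (fun t : ℝ => NormedSpace.exp (t • A) x) (A (NormedSpace.exp (t • A) x)) t := by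
  simpa using (hasDerivAt_exp_smul_const' (𝕂 := ℝ) A t).clm_apply (hasDerivAt_const t x)

lemma continuous_exp_smul_apply (A : E →L[ℝ] E) (x : E) :
    Continuous fun t : ℝ => NormedSpace.exp (t • A) x :=
  continuous_iff_continuousAt.2 fun t => (hasDerivAt_exp_smul_apply A x t).continuousAt

variable (hA : ∀ t : ℝ, 0 ≤ t → ‖NormedSpace.exp (t • A)‖ ≤ 1) (x : E) (hμ : 0 < μ)
include hA hμ

lemma integrableOn_exp_smul_exp_smul_apply :
    IntegrableOn (fun t : ℝ => Real.exp (-μ * t) • NormedSpace.exp (t • A) x) (Ioi 0) := by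
  refine ((exp_neg_integrableOn_Ioi 0 hμ).mul_const ‖x‖).mono' ?_ ?_
  · exact (Continuous.smul (by fun_prop) (continuous_exp_smul_apply A x)).aestronglyMeasurable
  · filter_upwards [ae_restrict_mem measurableSet_Ioi] with t ht
    exact norm_exp_smul_exp_smul_apply_le hA x (mem_Ioi.1 ht).le

theorem smul_laplaceResolvent_sub_apply :
    μ • laplaceResolvent A μ x - A (laplaceResolvent A μ x) = x := by
  have hInt := integrableOn_exp_smul_exp_smul_apply hA x hμ
  have hμInt : IntegrableOn
      (fun t : ℝ => μ • Real.exp (-μ * t) • NormedSpace.exp (t • A) x) (Ioi 0) := hInt.smul μ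
  have hderiv (t : ℝ) :
      HasDerivAt (fun t : ℝ => Real.exp (-μ * t) • NormedSpace.exp (t • A) x)
        (A (Real.exp (-μ * t) • NormedSpace.exp (t • A) x) -
          μ • Real.exp (-μ * t) • NormedSpace.exp (t • A) x) t := by
    refine (((hasDerivAt_id t).const_mul (-μ)).exp.smul
      (hasDerivAt_exp_smul_apply A x t)).congr_deriv ?_
    simp only [map_smul, id, mul_one, mul_neg, neg_smul, sub_eq_add_neg, smul_smul,
      mul_comm μ]
  have hFTC := integral_Ioi_of_hasDerivAt_of_tendsto' (a := 0) (fun t _ => hderiv t)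
    ((A.integrable_comp hInt).sub hμInt) (tendsto_exp_smul_exp_smul_apply hA x hμ)
  rw [integral_sub (A.integrable_comp hInt) hμInt, A.integral_comp_comm hInt, integral_smul,
    zero_sub] at hFTC
  rw [← neg_sub, laplaceResolvent, hFTC]
  simp

end Resolvent

lemma inner_laplaceResolvent {E : Type*} [NormedAddCommGroup E] [InnerProductSpace ℝ E]
    [CompleteSpace E] {A : E →L[ℝ] E} (hA : ∀ t : ℝ, 0 ≤ t → ‖NormedSpace.exp (t • A)‖ ≤ 1)
    {μ : ℝ} (hμ : 0 < μ) (x y : E) :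
    ⟪y, laplaceResolvent A μ x⟫_ℝ =
      ∫ t in Ioi (0 : ℝ), Real.exp (-μ * t) * ⟪y, NormedSpace.exp (t • A) x⟫_ℝ := by
  rw [laplaceResolvent, ← integral_inner (integrableOn_exp_smul_exp_smul_apply hA x hμ)]
  simp only [real_inner_smul_right]

section Gamma

variable {a : ℝ} (ha : 0 < a)
include ha

lemma setIntegral_rpow_mul_exp_neg_mul {t : ℝ} (ht : 0 < t) :
    ∫ μ in Ioi (0 : ℝ), μ ^ (a - 1) * Real.exp (-μ * t) = Real.Gamma a / t ^ a := by
  simp_rw [neg_mul, mul_comm _ t]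
  rw [Real.integral_rpow_mul_exp_neg_mul_Ioi ha ht, Real.div_rpow zero_le_one ht.le,
    Real.one_rpow, one_div_mul_eq_div]

lemma integrableOn_rpow_mul_exp_neg_mul {t : ℝ} (ht : 0 < t) :
    IntegrableOn (fun μ : ℝ => μ ^ (a - 1) * Real.exp (-μ * t)) (Ioi 0) := by
  refine .of_integral_ne_zero ?_
  rw [setIntegral_rpow_mul_exp_neg_mul ha ht]
  have := Real.Gamma_pos_of_pos ha
  positivity

variable {φ : ℝ → ℝ} (hφ : IntegrableOn (fun t => φ t / t ^ a) (Ioi 0))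
include hφ

lemma integrable_prod_rpow_mul_exp_neg_mul :
    Integrable (fun p : ℝ × ℝ => p.1 ^ (a - 1) * Real.exp (-p.1 * p.2) * φ p.2)
      ((volume.restrict (Ioi 0)).prod (volume.restrict (Ioi 0))) := by
  have hφm : AEStronglyMeasurable φ (volume.restrict (Ioi 0)) := by
    refine (hφ.aestronglyMeasurable.mul
      (measurable_id.pow_const a).aestronglyMeasurable).congr ?_
    filter_upwards [ae_restrict_mem measurableSet_Ioi] with t ht
    exact div_mul_cancel₀ _ (Real.rpow_pos_of_pos ht a).ne'
  have hmeas : Measurable fun p : ℝ × ℝ => p.1 ^ (a - 1) * Real.exp (-p.1 * p.2) := by fun_prop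
  refine (integrable_prod_iff' (hmeas.aestronglyMeasurable.mul hφm.comp_snd)).2 ⟨?_, ?_⟩
  · filter_upwards [ae_restrict_mem measurableSet_Ioi] with t ht
    exact (integrableOn_rpow_mul_exp_neg_mul ha ht).mul_const (φ t)
  · refine (hφ.norm.const_mul (Real.Gamma a)).congr ?_
    filter_upwards [ae_restrict_mem measurableSet_Ioi] with t ht
    have hta : 0 < t ^ a := Real.rpow_pos_of_pos ht a
    calc Real.Gamma a * ‖φ t / t ^ a‖
        = (∫ μ in Ioi (0 : ℝ), μ ^ (a - 1) * Real.exp (-μ * t)) * ‖φ t‖ := by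
          rw [setIntegral_rpow_mul_exp_neg_mul ha ht, norm_div, Real.norm_of_nonneg hta.le]
          ring
      _ = ∫ μ in Ioi (0 : ℝ), ‖μ ^ (a - 1) * Real.exp (-μ * t) * φ t‖ := by
          rw [← integral_mul_const]
          refine setIntegral_congr_fun measurableSet_Ioi fun μ hμ => ?_
          have hμa : 0 < μ ^ (a - 1) := Real.rpow_pos_of_pos hμ _
          simp only [norm_mul, Real.norm_of_nonneg hμa.le, Real.norm_of_nonneg (Real.exp_pos _).le]

lemma integrableOn_rpow_mul_laplace :
    IntegrableOn (fun μ : ℝ => μ ^ (a - 1) * ∫ t in Ioi (0 : ℝ), Real.exp (-μ * t) * φ t)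
      (Ioi 0) := by
  simpa only [IntegrableOn, mul_assoc, integral_const_mul] using
    (integrable_prod_rpow_mul_exp_neg_mul ha hφ).integral_prod_left

theorem setIntegral_rpow_mul_laplace :
    ∫ μ in Ioi (0 : ℝ), μ ^ (a - 1) * ∫ t in Ioi (0 : ℝ), Real.exp (-μ * t) * φ t =
      Real.Gamma a * ∫ t in Ioi (0 : ℝ), φ t / t ^ a := by
  calc ∫ μ in Ioi (0 : ℝ), μ ^ (a - 1) * ∫ t in Ioi (0 : ℝ), Real.exp (-μ * t) * φ t
      = ∫ μ in Ioi (0 : ℝ), ∫ t in Ioi (0 : ℝ), μ ^ (a - 1) * Real.exp (-μ * t) * φ t := by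
        simp only [mul_assoc, integral_const_mul]
    _ = ∫ t in Ioi (0 : ℝ), ∫ μ in Ioi (0 : ℝ), μ ^ (a - 1) * Real.exp (-μ * t) * φ t :=
        integral_integral_swap (integrable_prod_rpow_mul_exp_neg_mul ha hφ)
    _ = ∫ t in Ioi (0 : ℝ), Real.Gamma a * (φ t / t ^ a) := by
        refine setIntegral_congr_fun measurableSet_Ioi fun t ht => ?_
        simp only [integral_mul_const, setIntegral_rpow_mul_exp_neg_mul ha ht]
        ring
    _ = Real.Gamma a * ∫ t in Ioi (0 : ℝ), φ t / t ^ a := integral_const_mul _ _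

end Gamma

section FractionalKernel

variable {d : ℕ} {s : ℝ}

lemma integrableOn_one_sub_heatG_zero_div_rpow (d : ℕ) (hs : s ∈ Ioo (0 : ℝ) 1) :
    IntegrableOn (fun t : ℝ => (1 - heatG d 0 t) / t ^ (1 + s)) (Ioi 0) := by
  have hmeas : AEStronglyMeasurable (fun t : ℝ => (1 - heatG d 0 t) / t ^ (1 + s)) :=
    ((measurable_const.sub (measurable_heatG 0)).div
      (measurable_id.pow_const _)).aestronglyMeasurable
  have hnonneg {t : ℝ} (ht : 0 < t) : 0 ≤ (1 - heatG d 0 t) / t ^ (1 + s) :=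
    div_nonneg ((hasSum_offDiagHeatG t).nonneg fun m => offDiagHeatG_nonneg ht.le m)
      (Real.rpow_pos_of_pos ht _).le
  rw [← Ioc_union_Ioi_eq_Ioi (zero_le_one : (0 : ℝ) ≤ 1)]
  refine IntegrableOn.union ?_ ?_
  · have hInt : IntegrableOn (fun t : ℝ => 2 * d * t ^ (-s)) (Ioc 0 1) :=
      ((intervalIntegrable_iff_integrableOn_Ioc_of_le zero_le_one).1
        (intervalIntegral.intervalIntegrable_rpow' (by linarith [hs.2]))).const_mul _
    refine hInt.mono' hmeas.restrict ?_
    filter_upwards [ae_restrict_mem measurableSet_Ioc] with t ht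
    have ht0 : 0 < t := ht.1
    calc ‖(1 - heatG d 0 t) / t ^ (1 + s)‖ = (1 - heatG d 0 t) / t ^ (1 + s) :=
          Real.norm_of_nonneg (hnonneg ht0)
      _ ≤ 2 * d * t / t ^ (1 + s) := by gcongr; exact one_sub_heatG_zero_le ht0.le
      _ = 2 * d * t ^ (-s) := by
          rw [Real.rpow_add ht0, Real.rpow_one, Real.rpow_neg ht0.le]
          field_simp
  · refine (integrableOn_Ioi_rpow_of_lt (by linarith [hs.1]) zero_lt_one
      (a := -(1 + s))).mono' hmeas.restrict ?_
    filter_upwards [ae_restrict_mem measurableSet_Ioi] with t ht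
    have ht0 : 0 < t := zero_lt_one.trans ht
    calc ‖(1 - heatG d 0 t) / t ^ (1 + s)‖ = (1 - heatG d 0 t) / t ^ (1 + s) :=
          Real.norm_of_nonneg (hnonneg ht0)
      _ ≤ 1 / t ^ (1 + s) := by gcongr; exact sub_le_self _ (heatG_nonneg ht0.le 0)
      _ = t ^ (-(1 + s)) := by rw [Real.rpow_neg ht0.le, one_div]

/-- The constant `h^{-2s} |Γ(-s)|⁻¹` in front of the integral defining `K_s^h`. -/
noncomputable def kernelConst (h s : ℝ) : ℝ := h ^ (-(2 * s)) * |Real.Gamma (-s)|⁻¹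

lemma kernelConst_pos {h : ℝ} (hh : 0 < h) (hs : s ∈ Ioo (0 : ℝ) 1) : 0 < kernelConst h s := by
  have hΓ : Real.Gamma (-s) ≠ 0 := Real.Gamma_ne_zero fun m hm => by
    have h0 : (0 : ℝ) < m := neg_injective hm ▸ hs.1
    have h1 : (m : ℝ) < 1 := neg_injective hm ▸ hs.2
    norm_cast at h0 h1
    omega
  exact mul_pos (Real.rpow_pos_of_pos hh _) (inv_pos.2 (abs_pos.2 hΓ))

lemma Ksh_eq_kernelConst_mul (h s : ℝ) (m : Fin d → ℤ) :
    Ksh d h s m =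
      kernelConst h s * ∫ t in Ioi (0 : ℝ), offDiagHeatG d m t / t ^ (1 + s) := by
  unfold Ksh offDiagHeatG
  split_ifs
  · simp
  · rfl

theorem hasSum_Ksh_mul (h : ℝ) (hs : s ∈ Ioo (0 : ℝ) 1) {a : (Fin d → ℤ) → ℝ} {C : ℝ}
    (ha : ∀ m, |a m| ≤ C) {g : ℝ → ℝ}
    (hg : ∀ t, 0 < t → HasSum (fun m => offDiagHeatG d m t * a m) (g t)) :
    HasSum (fun m => Ksh d h s m * a m)
      (kernelConst h s * ∫ t in Ioi (0 : ℝ), g t / t ^ (1 + s)) := by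
  have hbound (t : ℝ) : HasSum (fun m => offDiagHeatG d m t / t ^ (1 + s) * C)
      ((1 - heatG d 0 t) / t ^ (1 + s) * C) :=
    ((hasSum_offDiagHeatG t).div_const _).mul_right C
  have hsum : HasSum (fun m => ∫ t in Ioi (0 : ℝ), offDiagHeatG d m t / t ^ (1 + s) * a m)
      (∫ t in Ioi (0 : ℝ), g t / t ^ (1 + s)) := by
    refine hasSum_integral_of_dominated_convergence
      (fun m t => offDiagHeatG d m t / t ^ (1 + s) * C) (fun m => ?_) (fun m => ?_)
      (.of_forall fun t => (hbound t).summable) ?_ ?_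
    · exact (((measurable_offDiagHeatG m).div (measurable_id.pow_const _)).mul_const
        _).aestronglyMeasurable
    · filter_upwards [ae_restrict_mem measurableSet_Ioi] with t ht
      have hnonneg := div_nonneg (offDiagHeatG_nonneg (mem_Ioi.1 ht).le m)
        (Real.rpow_pos_of_pos ht (1 + s)).le
      rw [norm_mul, Real.norm_of_nonneg hnonneg]
      exact mul_le_mul_of_nonneg_left (ha m) hnonneg
    · simp_rw [(hbound _).tsum_eq]
      exact (integrableOn_one_sub_heatG_zero_div_rpow d hs).mul_const C
    · filter_upwards [ae_restrict_mem measurableSet_Ioi] with t ht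
      exact ((hg t ht).div_const _).congr_fun fun m => div_mul_eq_mul_div _ _ _
  refine (hsum.mul_left (kernelConst h s)).congr_fun fun m => ?_
  rw [Ksh_eq_kernelConst_mul, integral_mul_const, mul_assoc]

lemma summable_Ksh (h : ℝ) (hs : s ∈ Ioo (0 : ℝ) 1) : Summable (Ksh d h s) := by
  simpa using (hasSum_Ksh_mul h hs (a := fun _ => 1) (C := 1) (by simp)
    fun t _ => by simpa using hasSum_offDiagHeatG t).summable

/-- The convolution `K_s^h * u` on `ℓ²(ℤ^d)`. -/
noncomputable def kernelConv (h s : ℝ) (u : ℓ²(Fin d → ℤ, ℝ)) : ℓ²(Fin d → ℤ, ℝ) :=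
  ∑' m, Ksh d h s m • shift m u

lemma hasSum_kernelConv (h : ℝ) (hs : s ∈ Ioo (0 : ℝ) 1) (u : ℓ²(Fin d → ℤ, ℝ)) :
    HasSum (fun m => Ksh d h s m • shift m u) (kernelConv h s u) := by
  refine (Summable.of_norm_bounded ((summable_Ksh h hs).norm.mul_right ‖u‖) fun m => ?_).hasSum
  rw [norm_smul, norm_shift_apply]

lemma fracLap_eq_sub_kernelConv (h : ℝ) (hs : s ∈ Ioo (0 : ℝ) 1) (u : ℓ²(Fin d → ℤ, ℝ))
    (j : Fin d → ℤ) :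
    fracLap d h s u j = (∑' m, Ksh d h s m) * u j - kernelConv h s u j := by
  have hconv : HasSum (fun m => Ksh d h s m * u (j - m)) (kernelConv h s u j) :=
    (hasSum_kernelConv h hs u).mapL (lp.evalCLM ℝ (fun _ : Fin d → ℤ => ℝ) 2 j)
  rw [fracLap, ← (Equiv.subLeft j).tsum_eq,
    ← (((summable_Ksh h hs).hasSum.mul_right (u j)).sub hconv).tsum_eq]
  refine tsum_congr fun m => ?_
  simp only [Equiv.subLeft_apply, sub_sub_cancel]
  ring

section Pairing

variable {x y : ℓ²(Fin d → ℤ, ℝ)}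

local notation "Δ" => latticeLaplacian (Fin d)

lemma abs_inner_shift_le (x y : ℓ²(Fin d → ℤ, ℝ)) (m : Fin d → ℤ) :
    |⟪x, shift m y⟫_ℝ| ≤ ‖x‖ * ‖y‖ := by
  simpa using abs_real_inner_le_norm x (shift m y)

variable (hxy : ⟪x, y⟫_ℝ = 0)
include hxy

lemma hasSum_offDiagHeatG_mul_inner_shift (t : ℝ) :
    HasSum (fun m => offDiagHeatG d m t * ⟪x, shift m y⟫_ℝ)
      ⟪x, NormedSpace.exp (t • Δ) y⟫_ℝ := by
  have hpair := (hasSum_heatG_smul_shift t).mapL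
    ((innerSL ℝ x).comp (ContinuousLinearMap.apply ℝ ℓ²(Fin d → ℤ, ℝ) y))
  refine hpair.congr_fun fun m => ?_
  have hshift : shift (0 : Fin d → ℤ) y = y := by
    ext j
    simp
  rcases eq_or_ne m 0 with rfl | hm
  · simp [offDiagHeatG, hshift, hxy]
  · simp [offDiagHeatG, hm]

lemma abs_inner_exp_smul_latticeLaplacian_le {t : ℝ} (ht : 0 ≤ t) :
    |⟪x, NormedSpace.exp (t • Δ) y⟫_ℝ| ≤ (1 - heatG d 0 t) * (‖x‖ * ‖y‖) :=
  (hasSum_offDiagHeatG_mul_inner_shift hxy t).norm_le_of_bounded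
    ((hasSum_offDiagHeatG t).mul_right _) fun m => by
    rw [norm_mul, Real.norm_of_nonneg (offDiagHeatG_nonneg ht m)]
    exact mul_le_mul_of_nonneg_left (abs_inner_shift_le x y m) (offDiagHeatG_nonneg ht m)

lemma integrableOn_inner_exp_smul_latticeLaplacian_div_rpow (hs : s ∈ Ioo (0 : ℝ) 1) :
    IntegrableOn (fun t => ⟪x, NormedSpace.exp (t • Δ) y⟫_ℝ / t ^ (1 + s)) (Ioi 0) := by
  refine ((integrableOn_one_sub_heatG_zero_div_rpow d hs).mul_const (‖x‖ * ‖y‖)).mono' ?_ ?_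
  · have hcont : Continuous fun t : ℝ => ⟪x, NormedSpace.exp (t • Δ) y⟫_ℝ :=
      continuous_const.inner (continuous_exp_smul_apply Δ y)
    exact (hcont.measurable.div (measurable_id.pow_const _)).aestronglyMeasurable
  · filter_upwards [ae_restrict_mem measurableSet_Ioi] with t ht
    rw [norm_div, Real.norm_of_nonneg (Real.rpow_pos_of_pos ht _).le, div_mul_eq_mul_div]
    have := Real.rpow_pos_of_pos ht (1 + s)
    gcongr
    exact abs_inner_exp_smul_latticeLaplacian_le hxy (mem_Ioi.1 ht).le

theorem inner_kernelConv (h : ℝ) (hs : s ∈ Ioo (0 : ℝ) 1) :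
    ⟪x, kernelConv h s y⟫_ℝ = kernelConst h s *
      ∫ t in Ioi (0 : ℝ), ⟪x, NormedSpace.exp (t • Δ) y⟫_ℝ / t ^ (1 + s) := by
  have hpair := (hasSum_kernelConv h hs y).mapL (innerSL ℝ x)
  simp only [innerSL_apply_apply, real_inner_smul_right] at hpair
  exact hpair.unique (hasSum_Ksh_mul h hs (abs_inner_shift_le x y)
    fun t _ => hasSum_offDiagHeatG_mul_inner_shift hxy t)

end Pairing

end FractionalKernel

section UniqueContinuation

lemma frequently_atTop_of_ae_restrict_Ioi {P : ℝ → Prop}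
    (hP : ∀ᵐ μ ∂volume.restrict (Ioi (0 : ℝ)), P μ) : ∃ᶠ μ in atTop, 0 < μ ∧ P μ := by
  refine frequently_atTop'.2 fun M => ?_
  have hpos : ∃ᵐ μ : ℝ, μ ∈ Ioi (max M 0) := by
    rw [frequently_ae_mem_iff]
    simp
  obtain ⟨μ, hμ, hPμ⟩ :=
    (hpos.and_eventually ((ae_restrict_iff' measurableSet_Ioi).1 hP)).exists
  obtain ⟨hM, h0⟩ := max_lt_iff.1 (mem_Ioi.1 hμ)
  exact ⟨μ, hM, h0, hPμ h0⟩

variable {d : ℕ} {l : Fin d} {n : ℤ} {u : ℓ²(Fin d → ℤ, ℝ)}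

local notation "Δ" => latticeLaplacian (Fin d)

lemma inner_reindex_reflection_eq_zero {w : ℓ²(Fin d → ℤ, ℝ)}
    (hu : ∀ p ∈ halfSpace l n, u p = 0) (hw : ∀ p ∈ halfSpace l n, w p = 0) :
    ⟪reindex (reflection l n) u, w⟫_ℝ = 0 := by
  rw [inner_reindex_reflection_eq_inner_indicatorCLM hu, indicatorCLM_eq_zero_iff.2 hw,
    inner_zero_right]

lemma smul_laplaceResolvent_sub_latticeLaplacian {μ : ℝ} (hμ : 0 < μ) (u : ℓ²(Fin d → ℤ, ℝ)) :
    μ • laplaceResolvent Δ μ u - Δ (laplaceResolvent Δ μ u) = u :=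
  smul_laplaceResolvent_sub_apply (fun _ => norm_exp_smul_latticeLaplacian_le_one) u hμ

lemma setIntegral_inner_reflection_eq_zero {h s : ℝ} (hh : 0 < h) (hs : s ∈ Ioo (0 : ℝ) 1)
    (hu : ∀ p ∈ halfSpace l n, u p = 0) (hfrac : ∀ p ∈ halfSpace l n, fracLap d h s u p = 0) :
    ∫ t in Ioi (0 : ℝ), ⟪reindex (reflection l n) u, NormedSpace.exp (t • Δ) u⟫_ℝ / t ^ (1 + s) =
      0 := by
  have hconv : ∀ p ∈ halfSpace l n, kernelConv h s u p = 0 := fun p hp => by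
    simpa [hu p hp, hfrac p hp] using fracLap_eq_sub_kernelConv h hs u p
  have hpair := inner_kernelConv (inner_reindex_reflection_eq_zero hu hu) h hs
  rw [inner_reindex_reflection_eq_zero hu hconv] at hpair
  exact (mul_eq_zero.1 hpair.symm).resolve_left (kernelConst_pos hh hs).ne'

lemma laplace_inner_reflection_eq_slabNorm_sq_sub {μ : ℝ} (hμ : 0 < μ)
    (hu : ∀ p ∈ halfSpace l n, u p = 0) :
    ∫ t in Ioi (0 : ℝ), Real.exp (-μ * t) *
        ⟪reindex (reflection l n) u, NormedSpace.exp (t • Δ) u⟫_ℝ =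
      slabNorm l (laplaceResolvent Δ μ u) (n - 1) ^ 2 -
        slabNorm l (laplaceResolvent Δ μ u) n ^ 2 := by
  rw [← inner_laplaceResolvent (fun _ => norm_exp_smul_latticeLaplacian_le_one) hμ,
    inner_reindex_reflection_eq_slabNorm_sq_sub
      (smul_laplaceResolvent_sub_latticeLaplacian hμ u) hu]

lemma ae_slabNorm_laplaceResolvent_eq {h s : ℝ} (hh : 0 < h) (hs : s ∈ Ioo (0 : ℝ) 1)
    (hu : ∀ p ∈ halfSpace l n, u p = 0) (hfrac : ∀ p ∈ halfSpace l n, fracLap d h s u p = 0) :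
    ∀ᵐ μ ∂volume.restrict (Ioi (0 : ℝ)),
      slabNorm l (laplaceResolvent Δ μ u) (n - 1) = slabNorm l (laplaceResolvent Δ μ u) n := by
  have hs' : 0 < 1 + s := by linarith [hs.1]
  have hφ := integrableOn_inner_exp_smul_latticeLaplacian_div_rpow
    (inner_reindex_reflection_eq_zero hu hu) hs
  have hzero := setIntegral_rpow_mul_laplace hs' hφ
  rw [setIntegral_inner_reflection_eq_zero hh hs hu hfrac, mul_zero,
    integral_eq_zero_iff_of_nonneg_ae ?_ (integrableOn_rpow_mul_laplace hs' hφ)] at hzero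
  · filter_upwards [hzero, ae_restrict_mem measurableSet_Ioi] with μ hzero hμ
    rw [laplace_inner_reflection_eq_slabNorm_sq_sub hμ hu, Pi.zero_apply,
      mul_eq_zero_iff_left (Real.rpow_pos_of_pos hμ _).ne', sub_eq_zero] at hzero
    exact (sq_eq_sq₀ (norm_nonneg _) (norm_nonneg _)).1 hzero
  · filter_upwards [ae_restrict_mem measurableSet_Ioi] with μ hμ
    rw [laplace_inner_reflection_eq_slabNorm_sq_sub hμ hu]
    have hle := slabNorm_le_slabNorm_sub_one (mem_Ioi.1 hμ).le
      (smul_laplaceResolvent_sub_latticeLaplacian hμ u) hu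
    exact mul_nonneg (Real.rpow_pos_of_pos hμ _).le
      (sub_nonneg.2 (pow_le_pow_left₀ (norm_nonneg _) hle 2))

theorem frequentlyResolventVanishes_of_fracLap_eq_zero {h s : ℝ} (hh : 0 < h)
    (hs : s ∈ Ioo (0 : ℝ) 1) (hu : ∀ p ∈ halfSpace l n, u p = 0)
    (hfrac : ∀ p ∈ halfSpace l n, fracLap d h s u p = 0) :
    FrequentlyResolventVanishes l u (n - 1) :=
  (frequently_atTop_of_ae_restrict_Ioi
    (ae_slabNorm_laplaceResolvent_eq hh hs hu hfrac)).mono fun _ ⟨hμ, heq⟩ =>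
      have hv := smul_laplaceResolvent_sub_latticeLaplacian hμ u
      ⟨_, hv, eq_zero_of_slabNorm_sub_one_eq hμ hv hu heq⟩

end UniqueContinuation

end DiscreteLaplacian

open DiscreteLaplacian in
theorem halfspace_UCP_general (d : ℕ) (l : Fin d) (n : ℤ) (h s : ℝ) (hh : 0 < h)
    (hs : s ∈ Set.Ioo (0 : ℝ) 1) (u : (Fin d → ℤ) → ℝ)
    (hu : Summable fun j : Fin d → ℤ => (u j) ^ 2)
    (hvan : ∀ j : Fin d → ℤ, n ≤ j l → u j = 0 ∧ fracLap d h s u j = 0) :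
    ∀ j : Fin d → ℤ, u j = 0 := by
  have hresolvent : FrequentlyResolventVanishes l ⟨u, memℓp_two_iff_summable_sq.2 hu⟩ (n - 1) :=
    frequentlyResolventVanishes_of_fracLap_eq_zero hh hs (fun j hj => (hvan j hj).1)
      fun j hj => (hvan j hj).2
  exact congrFun (congrArg Subtype.val hresolvent.eq_zero)

/-- Unique continuation from the upper half-space: if `u` is square-summable
and `u = 0 = (-Δ_d)^s u` on `{j : j_d ≥ 0}`, then `u ≡ 0`. -/
theorem halfspace_UCP (d : ℕ) (hd : 1 ≤ d) (h s : ℝ) (hh : 0 < h)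
    (hs : s ∈ Set.Ioo (0 : ℝ) 1) (u : (Fin d → ℤ) → ℝ)
    (hu : Summable fun j : Fin d → ℤ => (u j) ^ 2)
    (hvan : ∀ j : Fin d → ℤ, 0 ≤ j ⟨d - 1, by omega⟩ →
      u j = 0 ∧ fracLap d h s u j = 0) :
    ∀ j : Fin d → ℤ, u j = 0 :=
  halfspace_UCP_general d ⟨d - 1, by omega⟩ 0 h s hh hs u hu hvan
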